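/- arXiv:1607.07061 — 9 statements merged into one kernel-verified Lean document; each statement's English description precedes it below -/
import Mathlib

section
/- Let (X, τ₁, τ₂) be a bispace and let i, j ∈ {1,2} with i ≠ j. If A ⊆ X and there exists an (i,j)-semi preopen set U such that U ⊆ A ⊆ τⱼcl(U), then A is (i,j)-semi preopen. -/
/-- An Alexandroff space (σ-space) structure on `X`: a collection of "open" sets
containing `∅` and `X`, closed under countable unions and finite (binary) intersections. -/
structure AlexSpace (X : Type*) where
  opens : Set (Set X)
  empty_mem : ∅ ∈ opens
  univ_mem : Set.univ ∈ opens
  countable_sUnion_mem : ∀ S : Set (Set X), S.Countable → S ⊆ opens → ⋃₀ S ∈ opens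
  inter_mem : ∀ U V : Set X, U ∈ opens → V ∈ opens → U ∩ V ∈ opens

namespace AlexSpace

variable {X : Type*}

/-- A set is closed if its complement is open. -/
def IsClosed (τ : AlexSpace X) (F : Set X) : Prop := Fᶜ ∈ τ.opens

/-- The closure of `A`: the intersection of all closed sets containing `A`. -/
def cl (τ : AlexSpace X) (A : Set X) : Set X := ⋂₀ {F | τ.IsClosed F ∧ A ⊆ F}

/-- The interior of `A`: the union of all open sets contained in `A`. -/
def int (τ : AlexSpace X) (A : Set X) : Set X := ⋃₀ {U | U ∈ τ.opens ∧ U ⊆ A}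

end AlexSpace

/-- `A` is `(i,j)`-preopen w.r.t. the pair `(τi, τj)` if there is `U ∈ τi` with
`A ⊆ U ⊆ τj.cl A`. -/
def PreOpen {X : Type*} (τi τj : AlexSpace X) (A : Set X) : Prop :=
  ∃ U ∈ τi.opens, A ⊆ U ∧ U ⊆ τj.cl A

/-- `A` is `(i,j)`-semi preopen if there is an `(i,j)`-preopen `U` with `U ⊆ A ⊆ τj.cl U`. -/
def SemiPreOpen {X : Type*} (τi τj : AlexSpace X) (A : Set X) : Prop :=
  ∃ U, PreOpen τi τj U ∧ U ⊆ A ∧ A ⊆ τj.cl U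

theorem semiPreopen_of_between {X : Type*} (τ : Fin 2 → AlexSpace X) (i j : Fin 2)
    (hij : i ≠ j) (A U : Set X) (hU : SemiPreOpen (τ i) (τ j) U) (hUA : U ⊆ A)
    (hAcl : A ⊆ (τ j).cl U) :
    SemiPreOpen (τ i) (τ j) A := by
  obtain ⟨V, hV, hVU, hUcl⟩ := hU
  refine ⟨V, hV, hVU.trans hUA, fun x hx F hF => ?_⟩
  exact hAcl hx F ⟨hF.1, fun y hy => hUcl hy F hF⟩
end

section
/- Let (X, τ₁, τ₂) be a bispace and let i, j ∈ {1,2} with i ≠ j. If (A_k)_{k∈ℕ} is a countable family of (i,j)-semi preopen subsets of X, then the union ⋃_{k∈ℕ} A_k is (i,j)-semi preopen. -/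
theorem semiPreopen_iUnion {X : Type*} (τ : Fin 2 → AlexSpace X) (i j : Fin 2) (hij : i ≠ j)
    (A : ℕ → Set X) (hA : ∀ k : ℕ, SemiPreOpen (τ i) (τ j) (A k)) :
    SemiPreOpen (τ i) (τ j) (⋃ k : ℕ, A k) := by 
  have mono : ∀ {P Q : Set X}, P ⊆ Q → (τ j).cl P ⊆ (τ j).cl Q := by
    intro P Q h x hx F hF
    exact hx F ⟨hF.1, h.trans hF.2⟩
  choose U hU hUA hAU using hA
  choose V hV hUV hVU using hU
  refine ⟨⋃ k, U k, ⟨⋃ k, V k, ?_, Set.iUnion_mono hUV, ?_⟩, Set.iUnion_mono hUA, ?_⟩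
  · rw [← Set.sUnion_range]
    apply (τ i).countable_sUnion_mem _ (Set.countable_range V)
    rintro _ ⟨k, rfl⟩
    exact hV k
  · exact Set.iUnion_subset fun k => (hVU k).trans (mono (Set.subset_iUnion U k))
  · exact Set.iUnion_subset fun k => (hAU k).trans (mono (Set.subset_iUnion U k))
end

section
/- Let (X, τ₁, τ₂) be a bispace and let i, j ∈ {1,2} with i ≠ j. If A ⊆ X is (i,j)-preopen and B ∈ τ₁ ∩ τ₂, then A ∩ B is (i,j)-preopen. -/
theorem preopen_inter_biopen {X : Type*} (τ : Fin 2 → AlexSpace X) (i j : Fin 2)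
    (hij : i ≠ j) (A B : Set X) (hA : PreOpen (τ i) (τ j) A)
    (hBi : B ∈ (τ i).opens) (hBj : B ∈ (τ j).opens) :
    PreOpen (τ i) (τ j) (A ∩ B) := by
  obtain ⟨U, hU, hAU, hUA⟩ := hA
  refine ⟨U ∩ B, (τ i).inter_mem U B hU hBi, Set.inter_subset_inter_left B hAU, ?_⟩
  rintro x ⟨hxU, hxB⟩ F ⟨hF, hABF⟩
  have hG : (τ j).IsClosed (Fᶜ ∩ B)ᶜ := by
    unfold AlexSpace.IsClosed at *
    rw [compl_compl]
    exact (τ j).inter_mem _ _ hF hBj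
  have hx : x ∈ (Fᶜ ∩ B)ᶜ := hUA hxU _ ⟨hG, fun y hy h => h.1 (hABF ⟨hy, h.2⟩)⟩
  by_contra hxF
  exact hx ⟨hxF, hxB⟩
end

section
/- Let (X, τ₁, τ₂) be a bispace and let i, j ∈ {1,2} with i ≠ j. If A ⊆ X is (i,j)-semi preopen and B ∈ τ₁ ∩ τ₂, then A ∩ B is (i,j)-semi preopen. -/
theorem cl_inter_open_aux {X : Type*} (τ : AlexSpace X) (U B : Set X) (hB : B ∈ τ.opens) :
    τ.cl U ∩ B ⊆ τ.cl (U ∩ B) := by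
  rintro x ⟨hx, hxB⟩ F ⟨hF, hUF⟩
  have h : x ∈ F ∪ Bᶜ := by
    apply hx
    refine ⟨?_, ?_⟩
    · change (F ∪ Bᶜ)ᶜ ∈ τ.opens
      rw [Set.compl_union, compl_compl]
      exact τ.inter_mem _ _ hF hB
    · intro y hy
      by_cases hyB : y ∈ B
      · exact Or.inl (hUF ⟨hy, hyB⟩)
      · exact Or.inr hyB
  exact h.resolve_right (fun h' => h' hxB)

theorem semiPreopen_inter_biopen {X : Type*} (τ : Fin 2 → AlexSpace X) (i j : Fin 2)
    (hij : i ≠ j) (A B : Set X) (hA : SemiPreOpen (τ i) (τ j) A)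
    (hBi : B ∈ (τ i).opens) (hBj : B ∈ (τ j).opens) :
    SemiPreOpen (τ i) (τ j) (A ∩ B) := by
  obtain ⟨U, ⟨V, hV, hUV, hVU⟩, hUA, hAU⟩ := hA
  exact ⟨U ∩ B, ⟨V ∩ B, (τ i).inter_mem _ _ hV hBi, Set.inter_subset_inter_left _ hUV,
    (Set.inter_subset_inter_left _ hVU).trans (cl_inter_open_aux _ _ _ hBj)⟩,
    Set.inter_subset_inter_left _ hUA,
    (Set.inter_subset_inter_left _ hAU).trans (cl_inter_open_aux _ _ _ hBj)⟩
end

section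
/- Let (X, τ₁, τ₂) be a bispace, let i, j ∈ {1,2} with i ≠ j, and let A ⊆ Y ⊆ X. If A is (τᵢ, τⱼ)-preopen in X, then A is (τ_{i/Y}, τ_{j/Y})-preopen in the subbispace (Y, τ_{1/Y}, τ_{2/Y}), i.e., there exists a set W ∈ τ_{i/Y} with A ⊆ W ⊆ (closure of A in the trace structure τ_{j/Y} on Y). -/
/-- The trace (subspace) family on `Y`: sets of the form `U ∩ Y` with `U` open. -/
def traceOpens {X : Type*} (τ : AlexSpace X) (Y : Set X) : Set (Set X) :=
  {V | ∃ U ∈ τ.opens, V = U ∩ Y}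

/-- The closure of `A ⊆ Y` in the trace structure on `Y`: the intersection of all
subsets of `Y` containing `A` whose complement in `Y` belongs to the trace family. -/
def traceCl {X : Type*} (τ : AlexSpace X) (Y A : Set X) : Set X :=
  ⋂₀ {F | A ⊆ F ∧ F ⊆ Y ∧ Y \ F ∈ traceOpens τ Y}

/-- `A ⊆ Y` is preopen in the subbispace structure on `Y` w.r.t. `(τi, τj)`:
there is `W` in the trace family of `τi` with `A ⊆ W ⊆` trace-closure of `A` w.r.t. `τj`. -/
def TracePreOpen {X : Type*} (τi τj : AlexSpace X) (Y A : Set X) : Prop :=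
  ∃ W ∈ traceOpens τi Y, A ⊆ W ∧ W ⊆ traceCl τj Y A

theorem preopen_of_subspace {X : Type*} (τ : Fin 2 → AlexSpace X) (i j : Fin 2)
    (hij : i ≠ j) (Y A : Set X) (hAY : A ⊆ Y) (hA : PreOpen (τ i) (τ j) A) :
    TracePreOpen (τ i) (τ j) Y A := by
  obtain ⟨U, hU, hAU, hUc⟩ := hA
  refine ⟨U ∩ Y, ⟨U, hU, rfl⟩, fun x hx => ⟨hAU hx, hAY hx⟩, ?_⟩
  rintro x ⟨hxU, hxY⟩ F ⟨hAF, _, V, hV, hYV⟩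
  by_contra hxF
  have hxV : x ∈ V ∩ Y := hYV ▸ (⟨hxY, hxF⟩ : x ∈ Y \ F)
  have hcl : (τ j).IsClosed Vᶜ := by
    unfold AlexSpace.IsClosed
    rwa [compl_compl]
  have hAV : A ⊆ Vᶜ := fun a ha haV => by
    have h : a ∈ Y \ F := hYV ▸ (⟨haV, hAY ha⟩ : a ∈ V ∩ Y)
    exact h.2 (hAF ha)
  exact hUc hxU Vᶜ ⟨hcl, hAV⟩ hxV.1
end

section
/- Let (X, τ₁, τ₂) be a bispace, let i, j ∈ {1,2} with i ≠ j, let Y ∈ τᵢ, and let A ⊆ Y. If A is (τ_{i/Y}, τ_{j/Y})-preopen in the subbispace (Y, τ_{1/Y}, τ_{2/Y}), then A is (τᵢ, τⱼ)-preopen in X. -/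
theorem preopen_of_trace_preopen {X : Type*} (τ : Fin 2 → AlexSpace X) (i j : Fin 2)
    (hij : i ≠ j) (Y A : Set X) (hY : Y ∈ (τ i).opens) (hAY : A ⊆ Y)
    (hA : TracePreOpen (τ i) (τ j) Y A) :
    PreOpen (τ i) (τ j) A := by
  obtain ⟨W, ⟨U, hU, rfl⟩, hAW, hW⟩ := hA
  refine ⟨U ∩ Y, (τ i).inter_mem U Y hU hY, hAW, ?_⟩
  rintro x hx F ⟨hF, hAF⟩
  have h := hW hx (F ∩ Y) ⟨fun a ha => ⟨hAF ha, hAY ha⟩, Set.inter_subset_right, Fᶜ, hF, by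
    ext y
    simp only [Set.mem_diff, Set.mem_inter_iff, Set.mem_compl_iff]
    tauto⟩
  exact h.1
end

section
/- Let f : (X, τ₁, τ₂) → (Y, σ₁, σ₂) be a pairwise precontinuous function between bispaces and let i, j ∈ {1,2} with i ≠ j. Then for every subset A of X, f((i,j)pcl(A)) ⊆ σᵢcl(f(A)). -/
/-- The `(i,j)`-preclosure of `A`: the intersection of all `(i,j)`-preclosed sets
(i.e. sets whose complement is `(i,j)`-preopen) containing `A`. -/
def pcl {X : Type*} (τi τj : AlexSpace X) (A : Set X) : Set X :=
  ⋂₀ {F | PreOpen τi τj Fᶜ ∧ A ⊆ F}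

/-- `f` is pairwise precontinuous: for all `i ≠ j`, the preimage of every
`σ i`-open set is `(i,j)`-preopen in `X`. -/
def PairwisePreCont {X Y : Type*} (τ : Fin 2 → AlexSpace X) (σ : Fin 2 → AlexSpace Y)
    (f : X → Y) : Prop :=
  ∀ i j : Fin 2, i ≠ j → ∀ V ∈ (σ i).opens, PreOpen (τ i) (τ j) (f ⁻¹' V)

theorem image_pcl_subset_cl_image {X Y : Type*} (τ : Fin 2 → AlexSpace X)
    (σ : Fin 2 → AlexSpace Y) (f : X → Y) (hf : PairwisePreCont τ σ f)
    (i j : Fin 2) (hij : i ≠ j) (A : Set X) :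
    f '' pcl (τ i) (τ j) A ⊆ (σ i).cl (f '' A) := by
  rintro _ ⟨x, hx, rfl⟩ F ⟨hF, hAF⟩
  exact hx (f ⁻¹' F) ⟨hf i j hij Fᶜ hF, Set.image_subset_iff.mp hAF⟩
end

section
/- Let f : (X, τ₁, τ₂) → (Y, σ₁, σ₂) be a pairwise precontinuous function between bispaces and let A ∈ τ₁ ∩ τ₂. Then the restriction of f to A is pairwise precontinuous as a map (A, τ_{1/A}, τ_{2/A}) → (Y, σ₁, σ₂); that is, for each i, j ∈ {1,2} with i ≠ j and each V ∈ σᵢ, the set f⁻¹(V) ∩ A is (τ_{i/A}, τ_{j/A})-preopen in the subbispace A. -/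
theorem restriction_pairwisePreCont {X Y : Type*} (τ : Fin 2 → AlexSpace X)
    (σ : Fin 2 → AlexSpace Y) (f : X → Y) (hf : PairwisePreCont τ σ f)
    (A : Set X) (hA : ∀ k : Fin 2, A ∈ (τ k).opens) :
    ∀ i j : Fin 2, i ≠ j → ∀ V ∈ (σ i).opens,
      TracePreOpen (τ i) (τ j) A (f ⁻¹' V ∩ A) := by 
  intro i j hij V hV
  obtain ⟨U, hU, hPU, hUc⟩ := hf i j hij V hV
  refine ⟨U ∩ A, ⟨U, hU, rfl⟩, fun x hx => ⟨hPU hx.1, hx.2⟩, ?_⟩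
  rintro x ⟨hxU, hxA⟩ F ⟨hPF, hFA, G, hG, hGF⟩
  by_contra hxF
  have hxG : x ∈ G ∩ A := hGF ▸ (⟨hxA, hxF⟩ : x ∈ A \ F)
  have hx : x ∈ (G ∩ A)ᶜ := by
    refine hUc hxU (G ∩ A)ᶜ ⟨?_, ?_⟩
    · unfold AlexSpace.IsClosed
      rw [compl_compl]
      exact (τ j).inter_mem G A hG (hA j)
    · intro p hp hpG
      have h2 : p ∈ A \ F := hGF.symm ▸ hpG
      exact h2.2 (hPF ⟨hp, hpG.2⟩)
  exact hx hxG
end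

section
/- Let f : (X, τ₁, τ₂) → (X*, τ₁*, τ₂*) be a function between bispaces, let i, j ∈ {1,2} with i ≠ j, and suppose f is (i,j)-precontinuous, i.e., f⁻¹(U*) is (i,j)-preopen in X for every U* ∈ τᵢ*. Assume further that f(τⱼcl(f⁻¹(U*))) = U* for every U* ∈ τᵢ*. If D is a directed set and (x_α)_{α∈D} is a net converging to x in (X, τᵢ) (i.e., for every U ∈ τᵢ containing x there exists α₀ ∈ D with x_α ∈ U for all α ≥ α₀), then the net (f(x_α))_{α∈D} converges to f(x) in (X*, τᵢ*). -/
theorem net_image_converges {X Xs : Type*} (τ : Fin 2 → AlexSpace X)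
    (τs : Fin 2 → AlexSpace Xs) (i j : Fin 2) (hij : i ≠ j) (f : X → Xs)
    (hf : ∀ Us ∈ (τs i).opens, PreOpen (τ i) (τ j) (f ⁻¹' Us))
    (hC : ∀ Us ∈ (τs i).opens, f '' ((τ j).cl (f ⁻¹' Us)) = Us)
    {D : Type*} [Preorder D] [Nonempty D] [IsDirected D (· ≤ ·)]
    (x : D → X) (p : X)
    (hconv : ∀ U ∈ (τ i).opens, p ∈ U → ∃ α₀ : D, ∀ α : D, α₀ ≤ α → x α ∈ U) :
    ∀ Us ∈ (τs i).opens, f p ∈ Us → ∃ α₀ : D, ∀ α : D, α₀ ≤ α → f (x α) ∈ Us := by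
  intro Us hUs hp
  obtain ⟨U, hU, hAU, hUcl⟩ := hf Us hUs
  obtain ⟨α₀, h⟩ := hconv U hU (hAU hp)
  refine ⟨α₀, fun α hα => ?_⟩
  rw [← hC Us hUs]
  exact ⟨x α, hUcl (h α hα), rfl⟩
end
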